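/- arXiv:2210.08840 — 2 statements merged into one kernel-verified Lean document; each statement's English description precedes it below -/
import Mathlib

section
/- Let n ∈ O_K be primary and not a perfect square, and let χ̃_n be the Dirichlet character modulo 2n defined by χ̃_n = ψ_j · (·/n) when n is of type j (j = 1, 2). Then for every y > 0, ∑_{0 ≠ m ∈ O_K} χ̃_n(m) exp(−2πy N(m)) = (1/(2y N(2n))) ∑_{0 ≠ k ∈ O_K} g(k, χ̃_n) exp(−π N(k)/(2y N(2n))). -/
open Complex Real Filter Topology
open scoped BigOperators Classical

noncomputable section

/-- The norm `N(n)` of a Gaussian integer, as a real number. -/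
def Nm (n : GaussianInt) : ℝ := ((Zsqrtd.norm n : ℤ) : ℝ)

/-- The element `1 + i` of `ℤ[i]`. -/
def ωg : GaussianInt := ⟨1, 1⟩

/-- The element `i` of `ℤ[i]`. -/
def ig : GaussianInt := ⟨0, 1⟩

/-- `n` is primary: `n ≡ 1 mod (1+i)³`. -/
def IsPrimary (n : GaussianInt) : Prop := ωg ^ 3 ∣ (n - 1)

/-- `ẽ(z) = exp(2πi(z/(2i) − z̄/(2i)))`. -/
def eT (z : ℂ) : ℂ :=
  Complex.exp (2 * (Real.pi : ℂ) * Complex.I *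
    (z / (2 * Complex.I) - (starRingEnd ℂ) z / (2 * Complex.I)))

/-- `χ a n = (a/n)` is the quadratic residue symbol of `ℤ[i]`: on odd primes `ϖ` it is
the `±1` (or `0`) value determined by `(a/ϖ) ≡ a^((N(ϖ)-1)/2) mod ϖ`, it is extended
multiplicatively in the denominator over odd elements, and equals `1` on units. -/
structure IsQuadSym (χ : GaussianInt → GaussianInt → ℤ) : Prop where
  val_prime : ∀ ϖ a : GaussianInt, Prime ϖ → ¬ ωg ∣ ϖ → ¬ ϖ ∣ a →
    (χ a ϖ = 1 ∨ χ a ϖ = -1) ∧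
      ϖ ∣ (a ^ (((Zsqrtd.norm ϖ).toNat - 1) / 2) - (χ a ϖ : GaussianInt))
  zero_of_dvd : ∀ ϖ a : GaussianInt, Prime ϖ → ϖ ∣ a → χ a ϖ = 0
  mul_den : ∀ a m n : GaussianInt, ¬ ωg ∣ m → ¬ ωg ∣ n → χ a (m * n) = χ a m * χ a n
  unit_den : ∀ a u : GaussianInt, IsUnit u → χ a u = 1

/-- `L s m = L(s, χ_m)`: the Hecke `L`-function attached to the quadratic symbol `(m/·)`,
given by its Dirichlet series over primary elements (= odd ideals) for `Re s > 1`,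
and analytic away from `s = 1`. -/
def IsHeckeL (χ : GaussianInt → GaussianInt → ℤ) (L : ℂ → GaussianInt → ℂ) : Prop :=
  (∀ (m : GaussianInt) (s : ℂ), 1 < s.re →
      L s m = ∑' n : {n : GaussianInt // IsPrimary n}, (χ m n.1 : ℂ) / (Nm n.1 : ℂ) ^ s) ∧
    ∀ m : GaussianInt, DifferentiableOn ℂ (fun s => L s m) {s : ℂ | s ≠ 1}

/-- The generalized Riemann hypothesis for the family of quadratic Hecke `L`-functions. -/
def GRHfor (L : ℂ → GaussianInt → ℂ) : Prop :=
  ∀ m : GaussianInt, m ≠ 0 → ∀ s : ℂ, 0 < s.re → s.re < 1 → L s m = 0 → s.re = 1 / 2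

/-- The absolute norm of an ideal of `ℤ[i]`, as a complex number. -/
def idN (I : Ideal GaussianInt) : ℂ := (Nat.card (GaussianInt ⧸ I) : ℂ)

/-- The Dedekind zeta function of `ℚ(i)`. -/
def IsDedekindZetaK (Z : ℂ → ℂ) : Prop :=
  (∀ s : ℂ, 1 < s.re → Z s = ∑' I : {I : Ideal GaussianInt // I ≠ ⊥}, idN I.1 ^ (-s)) ∧
    DifferentiableOn ℂ Z {s : ℂ | s ≠ 1}

/-- `ζ_K^{(2)}`: the Euler product of `ζ_K` with the factor at the prime `(1+i)` omitted. -/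
def zeta2 (Z : ℂ → ℂ) (s : ℂ) : ℂ := Z s * (1 - (2 : ℂ) ^ (-s))

/-- `P(z) = ∏_ϖ (1 + ((N(ϖ)^{z-1/2} − 1)(N(ϖ) + 1))⁻¹)`, over all primes of `ℤ[i]`. -/
def Pfun (z : ℂ) : ℂ :=
  ∏' I : {I : Ideal GaussianInt // I ≠ ⊥ ∧ I.IsPrime},
    (1 + 1 / ((idN I.1 ^ (z - 1 / 2) - 1) * (idN I.1 + 1)))

/-- The Euler product over odd primes appearing in the ratios-conjecture main term. -/
def ratioEuler (α β : ℂ) : ℂ :=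
  ∏' I : {I : Ideal GaussianInt // I ≠ ⊥ ∧ I.IsPrime ∧ (2 : GaussianInt) ∉ I},
    (1 + (idN I.1 ^ (α - β) - 1) / (idN I.1 ^ (1 + α - β) * (idN I.1 ^ (1 + α + β) - 1)))

/-- `g r n` is the quadratic Gauss sum `g(r,n) = ∑_{x mod n} (x/n) ẽ(rx/n)`:
for any complete residue system `S` modulo `n` it is given by the indicated finite sum. -/
def IsGaussSum (χ : GaussianInt → GaussianInt → ℤ) (g : GaussianInt → GaussianInt → ℂ) : Prop :=
  ∀ r n : GaussianInt, n ≠ 0 → ∀ S : Finset GaussianInt,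
    (∀ z : GaussianInt, ∃! x, x ∈ S ∧ n ∣ (z - x)) →
    g r n = ∑ x ∈ S, (χ x n : ℂ) * eT (GaussianInt.toComplex (r * x) / GaussianInt.toComplex n)

/-- A Dirichlet character modulo `q` on `ℤ[i]` (extended by zero). -/
def IsDirichletChar (q : GaussianInt) (χ : GaussianInt → ℂ) : Prop :=
  χ 1 = 1 ∧ (∀ a b : GaussianInt, χ (a * b) = χ a * χ b) ∧
    (∀ a b : GaussianInt, q ∣ (a - b) → χ a = χ b) ∧
    (∀ a : GaussianInt, IsCoprime a q → ‖χ a‖ = 1) ∧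
    (∀ a : GaussianInt, ¬ IsCoprime a q → χ a = 0)

/-- The Gauss sum `g(r,χ) = ∑_{x mod q} χ(x) ẽ(rx/q)` of a Dirichlet character modulo `q`. -/
def IsGaussSumChar (q : GaussianInt) (χ : GaussianInt → ℂ) (g : GaussianInt → ℂ) : Prop :=
  ∀ r : GaussianInt, ∀ S : Finset GaussianInt,
    (∀ z : GaussianInt, ∃! x, x ∈ S ∧ q ∣ (z - x)) →
    g r = ∑ x ∈ S, χ x * eT (GaussianInt.toComplex (r * x) / GaussianInt.toComplex q)

/-- A primary `n = a + bi` is of type 1 if `a ≡ 1, b ≡ 0 (mod 4)` (else it is of type 2). -/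
def IsTypeOne (n : GaussianInt) : Prop := n.re % 4 = 1 ∧ n.im % 4 = 0

/-- `ψ₁`, the principal character modulo `2` on `ℤ[i]`. -/
def psi1 (m : GaussianInt) : ℂ := if IsCoprime m 2 then 1 else 0

/-- `ψ₂`, the primitive quadratic character modulo `2` on `ℤ[i]`:
`ψ₂(m) = 1` for `m ≡ 1 (mod 2)`, `ψ₂(m) = −1` for `m ≡ i (mod 2)`, and `0` otherwise. -/
def psi2 (m : GaussianInt) : ℂ :=
  if (2 : GaussianInt) ∣ (m - 1) then 1 else if (2 : GaussianInt) ∣ (m - ig) then -1 else 0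

/-- `χ̃_n = ψ_j · (·/n)`, where `j` is the type of the primary element `n`. -/
def tchi (χ : GaussianInt → GaussianInt → ℤ) (n m : GaussianInt) : ℂ :=
  (if IsTypeOne n then psi1 m else psi2 m) * (χ m n : ℂ)

/-! ### Analytic part: two-dimensional Poisson summation -/

lemma aux_one_dim (t : ℝ) (ht : 0 < t) (s : ℝ) :
    ∃ B : ℂ, HasSum (fun l : ℤ => cexp ((-(π * t * ((l : ℝ) + s) ^ 2) : ℝ) : ℂ))
        (B / ((Real.sqrt t : ℝ) : ℂ)) ∧
      HasSum (fun k : ℤ => cexp (2 * π * I * k * s) * cexp ((-(π * (k : ℝ) ^ 2 / t) : ℝ) : ℂ)) B := by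
  have htc : (t : ℂ) ≠ 0 := by exact_mod_cast ht.ne'
  have h2 : Summable (fun k : ℤ =>
      cexp (2 * π * I * k * s) * cexp ((-(π * (k : ℝ) ^ 2 / t) : ℝ) : ℂ)) := by
    have := (summable_jacobiTheta₂_term_iff (s : ℂ) (I / t)).2 (by
      rw [← Complex.ofReal_inv t |> fun h => (by rw [h, div_eq_mul_inv] : I * ((t⁻¹ : ℝ) : ℂ) = I / t)]
      simp [ht])
    refine this.congr fun k => ?_
    rw [jacobiTheta₂_term, ← Complex.exp_add]
    congr 1
    push_cast
    field_simp
    ring_nf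
    simp only [I_sq]
    ring
  have h1 : Summable (fun l : ℤ => cexp ((-(π * t * ((l : ℝ) + s) ^ 2) : ℝ) : ℂ)) := by
    have := (summable_jacobiTheta₂_term_iff (I * t * s : ℂ) (I * t)).2 (by simp [ht])
    refine (this.mul_left (cexp (-(π * t * s ^ 2)))).congr fun k => ?_
    rw [jacobiTheta₂_term, ← Complex.exp_add]
    congr 1
    push_cast
    ring_nf
    simp only [I_sq]
    ring
  refine ⟨_, ?_, h2.hasSum⟩
  convert h1.hasSum using 1
  have key := Complex.tsum_exp_neg_quadratic (a := ((t⁻¹ : ℝ) : ℂ)) (by simpa using ht) (-(I * s))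
  have e1 : ∑' n : ℤ, cexp (-π * ((t⁻¹ : ℝ) : ℂ) * n ^ 2 + 2 * π * (-(I * s)) * n) =
      ∑' k : ℤ, cexp (2 * π * I * k * s) * cexp ((-(π * (k : ℝ) ^ 2 / t) : ℝ) : ℂ) := by
    rw [← (Equiv.neg ℤ).tsum_eq]
    refine tsum_congr fun k => ?_
    rw [← Complex.exp_add]
    congr 1
    simp only [Equiv.neg_apply]
    push_cast
    field_simp
    ring
  have e2 : ∑' n : ℤ, cexp (-π / ((t⁻¹ : ℝ) : ℂ) * (n + I * (-(I * s))) ^ 2) =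
      ∑' l : ℤ, cexp ((-(π * t * ((l : ℝ) + s) ^ 2) : ℝ) : ℂ) := by
    refine tsum_congr fun k => ?_
    congr 1
    have : I * (-(I * (s : ℂ))) = s := by
      rw [mul_neg, ← mul_assoc, I_mul_I]; ring
    rw [this]
    push_cast
    field_simp
  rw [e1, e2] at key
  rw [key]
  have e3 : ((t⁻¹ : ℝ) : ℂ) ^ (1 / 2 : ℂ) = (((Real.sqrt t)⁻¹ : ℝ) : ℂ) := by
    rw [← Real.sqrt_inv, Real.sqrt_eq_rpow, Complex.ofReal_cpow (by positivity)]
    norm_num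
  rw [e3]
  have : ((Real.sqrt t : ℝ) : ℂ) ≠ 0 := by
    exact_mod_cast (Real.sqrt_pos.2 ht).ne'
  push_cast
  field_simp

def gEquiv : GaussianInt ≃ ℤ × ℤ where
  toFun z := (z.re, z.im)
  invFun p := ⟨p.1, p.2⟩
  left_inv _ := rfl
  right_inv _ := rfl

lemma hs_congr {ι : Type} {f g : ι → ℂ} {a : ℂ} (h : ∀ i, f i = g i) :
    HasSum f a ↔ HasSum g a := by
  rw [funext h]

lemma hasSum_gauss (f g : ℤ → ℂ) (a b : ℂ) (hf : HasSum f a) (hg : HasSum g b) :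
    HasSum (fun l : GaussianInt => f l.re * g l.im) (a * b) := by
  have hs : Summable (fun x : ℤ × ℤ => f x.1 * g x.2) :=
    summable_mul_of_summable_norm hf.summable.norm hg.summable.norm
  have h := hf.mul hg hs
  rw [← gEquiv.hasSum_iff] at h
  exact h

lemma eT_eq (z : ℂ) : eT z = cexp (2 * π * I * (z.im : ℂ)) := by
  unfold eT
  congr 1
  have : z / (2 * I) - (starRingEnd ℂ) z / (2 * I) = (z - (starRingEnd ℂ) z) / (2 * I) := by ring
  rw [this, Complex.sub_conj]
  have := I_ne_zero
  push_cast
  field_simp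

lemma aux_two_dim (t : ℝ) (ht : 0 < t) (z : ℂ) :
    ∃ B : ℂ, HasSum (fun l : GaussianInt =>
        cexp ((-(π * t * Complex.normSq (GaussianInt.toComplex l + z)) : ℝ) : ℂ)) (B / (t : ℂ)) ∧
      HasSum (fun k : GaussianInt => eT (GaussianInt.toComplex k * z) *
        cexp ((-(π * Nm k / t) : ℝ) : ℂ)) B := by
  obtain ⟨B1, hA1, hB1⟩ := aux_one_dim t ht z.re
  obtain ⟨B2, hA2, hB2⟩ := aux_one_dim t ht z.im
  refine ⟨B2 * B1, ?_, ?_⟩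
  · have h := hasSum_gauss _ _ _ _ hA1 hA2
    have e : B1 / ((Real.sqrt t : ℝ) : ℂ) * (B2 / ((Real.sqrt t : ℝ) : ℂ)) = B2 * B1 / (t : ℂ) := by
      have : (t : ℂ) = ((Real.sqrt t : ℝ) : ℂ) * ((Real.sqrt t : ℝ) : ℂ) := by
        rw [← Complex.ofReal_mul, Real.mul_self_sqrt ht.le]
      rw [this]
      have : ((Real.sqrt t : ℝ) : ℂ) ≠ 0 := by
        exact_mod_cast (Real.sqrt_pos.2 ht).ne'
      field_simp
    rw [e] at h
    refine (hs_congr fun l => ?_).2 h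
    rw [← Complex.exp_add, ← Complex.ofReal_add]
    congr 2
    rw [Complex.normSq_apply]
    simp
    ring
  · have h := hasSum_gauss _ _ _ _ hB2 hB1
    refine (hs_congr fun l => ?_).2 h
    rw [eT_eq, ← Complex.exp_add, ← Complex.exp_add, ← Complex.exp_add, ← Complex.exp_add]
    congr 1
    have : Nm l = (l.re : ℝ) ^ 2 + (l.im : ℝ) ^ 2 := by
      simp [Nm, Zsqrtd.norm_def]; ring
    rw [this, Complex.mul_im]
    have c1 : (GaussianInt.toComplex l).re = (l.re : ℝ) := by simp
    have c2 : (GaussianInt.toComplex l).im = (l.im : ℝ) := by simp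
    rw [c1, c2]
    push_cast
    ring

lemma normSq_toComplex' (q : GaussianInt) : Complex.normSq (GaussianInt.toComplex q) = Nm q := by
  rw [Complex.normSq_apply]
  simp [Nm, Zsqrtd.norm_def]

/-- Poisson summation for a periodic function. -/
lemma aux_poisson (q : GaussianInt) (hq : q ≠ 0) (f : GaussianInt → ℂ)
    (hf : ∀ a b : GaussianInt, q ∣ a - b → f a = f b)
    (S : Finset GaussianInt) (hS : ∀ z : GaussianInt, ∃! x, x ∈ S ∧ q ∣ (z - x))
    (g : GaussianInt → ℂ) (hg : IsGaussSumChar q f g) (y : ℝ) (hy : 0 < y) :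
    ∃ A : ℂ, HasSum (fun m : GaussianInt => f m * cexp ((-(2 * π * y * Nm m) : ℝ) : ℂ))
        (((1 / (2 * y * Nm q) : ℝ) : ℂ) * A) ∧
      HasSum (fun k : GaussianInt => g k * cexp ((-(π * Nm k / (2 * y * Nm q)) : ℝ) : ℂ)) A := by
  have hqc : GaussianInt.toComplex q ≠ 0 := by
    rwa [Ne, GaussianInt.toComplex_eq_zero]
  have hN : 0 < Nm q := by
    rw [← normSq_toComplex']; exact Complex.normSq_pos.2 hqc
  have ht : 0 < 2 * y * Nm q := by positivity
  choose B hA hB using fun x : GaussianInt =>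
    aux_two_dim (2 * y * Nm q) ht (GaussianInt.toComplex x / GaussianInt.toComplex q)
  refine ⟨∑ x ∈ S, f x * B x, ?_, ?_⟩
  · have h1 : ∀ x ∈ S, HasSum (fun m : GaussianInt => if q ∣ m - x then
        f m * cexp ((-(2 * π * y * Nm m) : ℝ) : ℂ) else 0)
        (f x * (B x / ((2 * y * Nm q : ℝ) : ℂ))) := by
      intro x _
      have hinj : Function.Injective (fun l : GaussianInt => x + q * l) := by
        intro a b hab
        exact mul_left_cancel₀ hq (add_left_cancel hab)
      rw [← hinj.hasSum_iff]
      · refine (hs_congr fun l => ?_).2 ((hA x).mul_left (f x))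
        have hd : q ∣ x + q * l - x := ⟨l, by ring⟩
        simp only [Function.comp, hd, if_true]
        rw [hf _ _ hd]
        congr 3
        rw [← normSq_toComplex' (x + q * l), ← normSq_toComplex' q]
        have : GaussianInt.toComplex (x + q * l) = GaussianInt.toComplex q *
            (GaussianInt.toComplex l + GaussianInt.toComplex x / GaussianInt.toComplex q) := by
          rw [map_add, map_mul]; field_simp; ring
        rw [this, Complex.normSq_mul]
        ring
      · intro m hm
        rw [if_neg]
        rintro ⟨l, hl⟩
        exact hm ⟨l, by simp only; rw [← hl]; ring⟩
    have h2 := hasSum_sum h1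
    convert h2 using 1
    · ext m
      obtain ⟨x, ⟨hxS, hx⟩, hu⟩ := hS m
      rw [Finset.sum_eq_single x]
      · rw [if_pos hx]
      · intro b hb hbx
        rw [if_neg]
        intro hd
        exact hbx (hu b ⟨hb, hd⟩)
      · intro h; exact absurd hxS h
    · rw [Finset.mul_sum]
      refine Finset.sum_congr rfl fun x _ => ?_
      push_cast
      ring
  · have h2 := hasSum_sum (fun x (_ : x ∈ S) => (hB x).mul_left (f x))
    refine (hs_congr fun k => ?_).2 h2
    rw [hg k S hS, Finset.sum_mul]
    refine Finset.sum_congr rfl fun x _ => ?_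
    rw [map_mul, mul_div_assoc]
    ring

/-! ### Arithmetic of the Gaussian integers -/

def gLin : GaussianInt ≃ₗ[ℤ] (Fin 2 → ℤ) where
  toFun := fun z => ![z.re, z.im]
  invFun := fun v => ⟨v 0, v 1⟩
  left_inv := fun z => rfl
  right_inv := fun v => by ext i; fin_cases i <;> rfl
  map_add' := fun a b => by ext i; fin_cases i <;> simp
  map_smul' := fun c a => by ext i; fin_cases i <;> simp

lemma gLin_apply (z : GaussianInt) : gLin z = ![z.re, z.im] := rfl

def gBasis : Module.Basis (Fin 2) ℤ GaussianInt := Module.Basis.ofEquivFun gLin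

lemma alg_norm (z : GaussianInt) : Algebra.norm ℤ z = Zsqrtd.norm z := by
  rw [Algebra.norm_eq_matrix_det gBasis, Matrix.det_fin_two]
  have h0 : gBasis 0 = ⟨1, 0⟩ := by
    rw [gBasis, Module.Basis.coe_ofEquivFun, LinearEquiv.symm_apply_eq, gLin_apply]
    ext i; fin_cases i <;> simp
  have h1 : gBasis 1 = ⟨0, 1⟩ := by
    rw [gBasis, Module.Basis.coe_ofEquivFun, LinearEquiv.symm_apply_eq, gLin_apply]
    ext i; fin_cases i <;> simp
  simp only [Algebra.leftMulMatrix_eq_repr_mul, h0, h1]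
  simp [gBasis, Zsqrtd.norm_def, gLin_apply]

instance gFree : Module.Free ℤ GaussianInt := Module.Free.of_basis gBasis
instance gFinite : Module.Finite ℤ GaussianInt := Module.Finite.of_basis gBasis

lemma card_quot (z : GaussianInt) :
    Nat.card (GaussianInt ⧸ Ideal.span {z}) = (Zsqrtd.norm z).toNat := by
  have h := Ideal.absNorm_span_singleton z
  rw [alg_norm, Ideal.absNorm_apply, Submodule.cardQuot_apply] at h
  rw [h]
  have := GaussianInt.norm_nonneg z
  omega

lemma finite_quot (z : GaussianInt) (hz : z ≠ 0) : Finite (GaussianInt ⧸ Ideal.span {z}) := by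
  apply Nat.finite_of_card_ne_zero
  rw [card_quot]
  have := GaussianInt.norm_pos.2 hz
  omega

lemma exists_residues (q : GaussianInt) (hq : q ≠ 0) :
    ∃ S : Finset GaussianInt, ∀ z : GaussianInt, ∃! x, x ∈ S ∧ q ∣ (z - x) := by
  have := finite_quot q hq
  have := Fintype.ofFinite (GaussianInt ⧸ Ideal.span {q})
  have key : ∀ a b : GaussianInt, q ∣ a - b ↔ (Ideal.Quotient.mk (Ideal.span {q}) a) =
      Ideal.Quotient.mk (Ideal.span {q}) b := by
    intro a b
    rw [Ideal.Quotient.eq, Ideal.mem_span_singleton]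
  choose r hr using (Ideal.Quotient.mk_surjective (I := Ideal.span {q}))
  refine ⟨Finset.univ.image r, fun z => ⟨r (Ideal.Quotient.mk _ z), ⟨by simp, ?_⟩, ?_⟩⟩
  · rw [key, hr]
  · rintro x ⟨hx, hd⟩
    obtain ⟨c, -, rfl⟩ := Finset.mem_image.1 hx
    rw [key, hr] at hd
    rw [hd]

/-! ### The quadratic symbol -/

lemma om_dvd (z : GaussianInt) : ωg ∣ z ↔ (z.re + z.im) % 2 = 0 := by
  constructor
  · rintro ⟨c, rfl⟩
    simp [ωg]
    omega
  · intro h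
    refine ⟨⟨(z.re + z.im) / 2, (z.im - z.re) / 2⟩, ?_⟩
    apply Zsqrtd.ext <;> simp [ωg] <;> omega

lemma two_dvd' (z : GaussianInt) : (2 : GaussianInt) ∣ z ↔ z.re % 2 = 0 ∧ z.im % 2 = 0 := by
  have := Zsqrtd.intCast_dvd (d := -1) 2 z
  rw [show ((2 : ℤ) : ℤ√(-1)) = (2 : GaussianInt) by norm_num] at this
  rw [this]
  omega

lemma norm_odd (p : GaussianInt) (h : ¬ ωg ∣ p) : (Zsqrtd.norm p) % 2 = 1 := by
  rw [om_dvd] at h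
  rw [Zsqrtd.norm_def]
  have h1 : (p.re + p.im) % 2 = 1 := by omega
  have h2 : (p.re * p.re - -1 * p.im * p.im) = (p.re + p.im) * (p.re + p.im) - 2 * (p.re * p.im) := by
    ring
  rw [h2, Int.sub_mul_emod_self_left, Int.mul_emod, h1]
  rfl

lemma not_dvd_two (p : GaussianInt) (hp : Prime p) (h : ¬ ωg ∣ p) : ¬ p ∣ 2 := by
  rintro ⟨c, hc⟩
  have h1 := congrArg Zsqrtd.norm hc
  rw [Zsqrtd.norm_mul] at h1
  have h2 : Zsqrtd.norm (2 : GaussianInt) = 4 := by decide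
  rw [h2] at h1
  have h3 := norm_odd p h
  have h0 := GaussianInt.norm_nonneg p
  have h4 : Zsqrtd.norm p ∣ 4 := ⟨_, h1⟩
  have h5 : Zsqrtd.norm p ≤ 4 := Int.le_of_dvd (by norm_num) h4
  have h6 : Zsqrtd.norm p = 1 := by
    generalize Zsqrtd.norm p = N at *
    interval_cases N <;> omega
  exact hp.not_isUnit (Zsqrtd.norm_eq_one_iff.1 (by rw [h6]; rfl))

/-- two signs congruent modulo an odd prime agree -/
lemma sign_eq (p : GaussianInt) (hp : ¬ p ∣ 2) (a b : ℤ) (ha : a = 1 ∨ a = -1) (hb : b = 1 ∨ b = -1)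
    (h : p ∣ (a : GaussianInt) - (b : GaussianInt)) : a = b := by
  rcases ha with rfl | rfl <;> rcases hb with rfl | rfl
  · rfl
  · exact absurd (by simpa [one_add_one_eq_two] using h) hp
  · refine absurd ?_ hp
    rw [← dvd_neg]
    convert h using 1
    push_cast
    ring
  · rfl

section
variable {χ : GaussianInt → GaussianInt → ℤ}

lemma not_om_mul {m n : GaussianInt} (h : ¬ ωg ∣ m * n) : ¬ ωg ∣ m ∧ ¬ ωg ∣ n :=
  ⟨fun h1 => h (h1.mul_right _), fun h1 => h (h1.mul_left _)⟩

lemma prime_periodic (hχ : IsQuadSym χ) (p a b : GaussianInt) (hp : Prime p) (ho : ¬ ωg ∣ p)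
    (h : p ∣ a - b) : χ a p = χ b p := by
  by_cases ha : p ∣ a
  · have hb : p ∣ b := (dvd_sub_right ha).1 h
    rw [hχ.zero_of_dvd p a hp ha, hχ.zero_of_dvd p b hp hb]
  · have hb : ¬ p ∣ b := fun hb => ha ((dvd_sub_left hb).1 h)
    obtain ⟨ha1, ha2⟩ := hχ.val_prime p a hp ho ha
    obtain ⟨hb1, hb2⟩ := hχ.val_prime p b hp ho hb
    refine sign_eq p (not_dvd_two p hp ho) _ _ ha1 hb1 ?_
    have h3 := h.trans (sub_dvd_pow_sub_pow a b (((Zsqrtd.norm p).toNat - 1) / 2))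
    have := dvd_add (dvd_sub hb2 ha2) h3
    convert this using 1
    ring

lemma prime_mul (hχ : IsQuadSym χ) (p a b : GaussianInt) (hp : Prime p) (ho : ¬ ωg ∣ p) :
    χ (a * b) p = χ a p * χ b p := by
  by_cases ha : p ∣ a
  · rw [hχ.zero_of_dvd p a hp ha, hχ.zero_of_dvd p _ hp (ha.mul_right b), zero_mul]
  by_cases hb : p ∣ b
  · rw [hχ.zero_of_dvd p b hp hb, hχ.zero_of_dvd p _ hp (hb.mul_left a), mul_zero]
  have hab : ¬ p ∣ a * b := fun h => (hp.dvd_or_dvd h).elim ha hb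
  obtain ⟨ha1, ha2⟩ := hχ.val_prime p a hp ho ha
  obtain ⟨hb1, hb2⟩ := hχ.val_prime p b hp ho hb
  obtain ⟨hc1, hc2⟩ := hχ.val_prime p _ hp ho hab
  refine sign_eq p (not_dvd_two p hp ho) _ _ hc1 ?_ ?_
  · rcases ha1 with h | h <;> rcases hb1 with h' | h' <;> simp [h, h']
  · have h3 := dvd_sub (dvd_add (ha2.mul_right (b ^ (((Zsqrtd.norm p).toNat - 1) / 2)))
      (hb2.mul_left (χ a p : GaussianInt))) hc2
    convert h3 using 1
    push_cast
    ring

lemma sym_periodic (hχ : IsQuadSym χ) (n : GaussianInt) : ¬ ωg ∣ n → ∀ a b : GaussianInt, n ∣ a - b →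
    χ a n = χ b n := by
  induction n using UniqueFactorizationMonoid.induction_on_prime with
  | h₁ => intro h; exact absurd (dvd_zero _) h
  | h₂ u hu => intro _ a b _; rw [hχ.unit_den a u hu, hχ.unit_den b u hu]
  | h₃ m p _ hp ih =>
    intro ho a b hab
    obtain ⟨h1, h2⟩ := not_om_mul ho
    rw [hχ.mul_den _ _ _ h1 h2, hχ.mul_den _ _ _ h1 h2,
      prime_periodic hχ p a b hp h1 ((dvd_mul_right _ _).trans hab),
      ih h2 a b ((dvd_mul_left _ _).trans hab)]

lemma sym_mul (hχ : IsQuadSym χ) (n : GaussianInt) : ¬ ωg ∣ n → ∀ a b : GaussianInt,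
    χ (a * b) n = χ a n * χ b n := by
  induction n using UniqueFactorizationMonoid.induction_on_prime with
  | h₁ => intro h; exact absurd (dvd_zero _) h
  | h₂ u hu => intro _ a b; simp [hχ.unit_den _ u hu]
  | h₃ m p _ hp ih =>
    intro ho a b
    obtain ⟨h1, h2⟩ := not_om_mul ho
    rw [hχ.mul_den _ _ _ h1 h2, hχ.mul_den _ _ _ h1 h2, hχ.mul_den _ _ _ h1 h2,
      prime_mul hχ p a b hp h1, ih h2 a b]
    ring

lemma sym_one (hχ : IsQuadSym χ) (n : GaussianInt) : ¬ ωg ∣ n → χ 1 n = 1 := by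
  induction n using UniqueFactorizationMonoid.induction_on_prime with
  | h₁ => intro h; exact absurd (dvd_zero _) h
  | h₂ u hu => intro _; simp [hχ.unit_den _ u hu]
  | h₃ m p _ hp ih =>
    intro ho
    obtain ⟨h1, h2⟩ := not_om_mul ho
    rw [hχ.mul_den _ _ _ h1 h2, ih h2, mul_one]
    have h := hχ.val_prime p 1 hp h1 (fun h => hp.not_isUnit (isUnit_of_dvd_one h))
    refine sign_eq p (not_dvd_two p hp h1) _ _ h.1 (Or.inl rfl) ?_
    rw [← dvd_neg]
    convert h.2 using 1
    simp

lemma sym_pow (hχ : IsQuadSym χ) (a n : GaussianInt) (ho : ¬ ωg ∣ n) (k : ℕ) :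
    ¬ ωg ∣ n ^ k ∧ χ a (n ^ k) = χ a n ^ k := by
  induction k with
  | zero =>
    refine ⟨?_, by simp [hχ.unit_den a 1 isUnit_one]⟩
    rw [pow_zero, om_dvd]; decide
  | succ k ih =>
    rw [pow_succ, pow_succ, hχ.mul_den _ _ _ ih.1 ho, ih.2]
    refine ⟨?_, rfl⟩
    have h1 := ih.1
    rw [om_dvd] at *
    simp only [Zsqrtd.re_mul, Zsqrtd.im_mul]
    generalize n ^ k = w at *
    have e : (w.re * n.re + -1 * w.im * n.im + (w.re * n.im + w.im * n.re)) =
      (w.re + w.im) * (n.re + n.im) - 2 * (w.im * n.im) := by ring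
    have h2 : (w.re + w.im) % 2 = 1 := by omega
    have h3 : (n.re + n.im) % 2 = 1 := by omega
    rw [e, Int.sub_mul_emod_self_left, Int.mul_emod, h2, h3]
    decide

lemma exists_nonres (hχ : IsQuadSym χ) (p : GaussianInt) (hp : Prime p) (ho : ¬ ωg ∣ p) :
    ∃ c, ¬ p ∣ c ∧ χ c p = -1 := by
  have hp0 := hp.ne_zero
  have hfin := finite_quot p hp0
  have hmax : (Ideal.span {p}).IsMaximal :=
    PrincipalIdealRing.isMaximal_of_irreducible hp.irreducible
  let : Field (GaussianInt ⧸ Ideal.span {p}) := Ideal.Quotient.field _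
  let := Fintype.ofFinite (GaussianInt ⧸ Ideal.span {p})
  have key : ∀ a : GaussianInt, p ∣ a ↔ (Ideal.Quotient.mk (Ideal.span {p}) a) = 0 := by
    intro a
    rw [Ideal.Quotient.eq_zero_iff_mem, Ideal.mem_span_singleton]
  have hchar : ringChar (GaussianInt ⧸ Ideal.span {p}) ≠ 2 := by
    intro h
    apply not_dvd_two p hp ho
    rw [key]
    have := ringChar.Nat.cast_ringChar (R := GaussianInt ⧸ Ideal.span {p})
    rw [h] at this
    rw [← this]
    exact map_natCast (Ideal.Quotient.mk (Ideal.span {p})) 2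
  obtain ⟨c, hc⟩ := FiniteField.exists_nonsquare hchar
  have hc0 : c ≠ 0 := by rintro rfl; exact hc (IsSquare.zero)
  obtain ⟨c, rfl⟩ := Ideal.Quotient.mk_surjective c
  have hpc : ¬ p ∣ c := by rw [key]; exact hc0
  refine ⟨c, hpc, ?_⟩
  obtain ⟨h1, h2⟩ := hχ.val_prime p c hp ho hpc
  refine h1.resolve_left fun h1 => hc ?_
  rw [FiniteField.isSquare_iff hchar hc0, ← Nat.card_eq_fintype_card, card_quot]
  rw [h1, key] at h2
  have hodd := norm_odd p ho
  have : (Zsqrtd.norm p).toNat / 2 = ((Zsqrtd.norm p).toNat - 1) / 2 := by omega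
  rw [this]
  simpa [sub_eq_zero] using h2

end

lemma factor_cases (n : GaussianInt) : (∃ u s : GaussianInt, IsUnit u ∧ n = u * s ^ 2) ∨
    ∃ p m : GaussianInt, ∃ k : ℕ, Prime p ∧ n = p ^ (2 * k + 1) * m ∧ ¬ p ∣ m := by
  induction n using UniqueFactorizationMonoid.induction_on_coprime with
  | h0 => exact Or.inl ⟨1, 0, isUnit_one, by simp⟩
  | h1 hx => exact Or.inl ⟨_, 1, hx, by simp⟩
  | hpr i hp =>
    rename_i p
    rcases Nat.even_or_odd' i with ⟨j, rfl | rfl⟩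
    · exact Or.inl ⟨1, p ^ j, isUnit_one, by ring⟩
    · exact Or.inr ⟨p, 1, j, hp, by simp, fun h => hp.not_isUnit (isUnit_of_dvd_one h)⟩
  | hcp hrel hx hy =>
    rename_i x y
    rcases hx with ⟨u, s, hu, rfl⟩ | ⟨p, m, k, hp, rfl, hm⟩
    · rcases hy with ⟨v, t, hv, rfl⟩ | ⟨p, m, k, hp, rfl, hm⟩
      · exact Or.inl ⟨u * v, s * t, hu.mul hv, by ring⟩
      · refine Or.inr ⟨p, u * s ^ 2 * m, k, hp, by ring, fun h => ?_⟩
        rcases hp.dvd_or_dvd h with h | h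
        · exact hp.not_isUnit (hrel h ((dvd_pow_self p (by omega)).mul_right m))
        · exact hm h
    · refine Or.inr ⟨p, m * y, k, hp, by ring, fun h => ?_⟩
      rcases hp.dvd_or_dvd h with h | h
      · exact hm h
      · exact hp.not_isUnit (hrel ((dvd_pow_self p (by omega)).mul_right m) h)

lemma primary_parity (n : GaussianInt) (hn : IsPrimary n) : n.re % 2 = 1 ∧ n.im % 2 = 0 := by
  obtain ⟨c, hc⟩ := hn
  have e : ωg ^ 3 = (⟨-2, 2⟩ : GaussianInt) := by decide
  rw [e] at hc
  have h1 := congrArg Zsqrtd.re hc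
  have h2 := congrArg Zsqrtd.im hc
  simp at h1 h2
  omega

lemma unit_cases (u : GaussianInt) (hu : IsUnit u) :
    u = 1 ∨ u = -1 ∨ u = ⟨0, 1⟩ ∨ u = ⟨0, -1⟩ := by
  have h := Zsqrtd.norm_eq_one_iff.2 hu
  have h0 := GaussianInt.norm_nonneg u
  have h1 : Zsqrtd.norm u = 1 := by omega
  rw [Zsqrtd.norm_def] at h1
  have ha : u.re ≤ 1 := by nlinarith [sq_nonneg u.im]
  have ha' : -1 ≤ u.re := by nlinarith [sq_nonneg u.im]
  have hb : u.im ≤ 1 := by nlinarith [sq_nonneg u.re]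
  have hb' : -1 ≤ u.im := by nlinarith [sq_nonneg u.re]
  obtain ⟨a, b⟩ := u
  simp only at *
  interval_cases a <;> interval_cases b <;> first | omega | (simp [Zsqrtd.ext_iff])

lemma odd_factor (n : GaussianInt) (hn : IsPrimary n) (hns : ¬ ∃ m : GaussianInt, n = m ^ 2) :
    ∃ p m : GaussianInt, ∃ k : ℕ, Prime p ∧ n = p ^ (2 * k + 1) * m ∧ ¬ p ∣ m := by
  refine (factor_cases n).resolve_left ?_
  rintro ⟨u, s, hu, rfl⟩
  have hp := primary_parity _ hn
  rcases unit_cases u hu with rfl | rfl | rfl | rfl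
  · exact hns ⟨s, by ring⟩
  · refine hns ⟨ig * s, ?_⟩
    have : ig ^ 2 = -1 := by decide
    rw [mul_pow, this]
  · have := hp.1
    simp [pow_two] at this
    have e : s.re * s.im = s.im * s.re := mul_comm _ _
    omega
  · have := hp.1
    simp [pow_two] at this
    have e : s.re * s.im = s.im * s.re := mul_comm _ _
    omega

lemma psi1_periodic (a b : GaussianInt) (h : (2 : GaussianInt) ∣ a - b) : psi1 a = psi1 b := by
  unfold psi1
  obtain ⟨c, hc⟩ := h
  have : a = b + 2 * c := by rw [← hc]; ring
  rw [this, IsCoprime.add_mul_left_left_iff]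

lemma psi2_periodic (a b : GaussianInt) (h : (2 : GaussianInt) ∣ a - b) : psi2 a = psi2 b := by
  unfold psi2
  simp only [two_dvd', ig, Zsqrtd.re_sub, Zsqrtd.im_sub, Zsqrtd.re_one, Zsqrtd.im_one] at *
  congr 1
  · apply propext; omega
  · congr 1
    apply propext; omega

lemma psi2_mul_i (a x : GaussianInt) (h : (2 : GaussianInt) ∣ a - ig) :
    psi2 (a * x) = - psi2 x := by
  have h1 : psi2 (a * x) = psi2 (ig * x) := psi2_periodic _ _ (by
    rw [← sub_mul]; exact h.mul_right x)
  rw [h1]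
  unfold psi2
  simp only [two_dvd', ig, Zsqrtd.re_sub, Zsqrtd.im_sub, Zsqrtd.re_one, Zsqrtd.im_one,
    Zsqrtd.re_mul, Zsqrtd.im_mul]
  split_ifs <;> first | omega | simp

lemma psi1_mul (a x : GaussianInt) (h : IsCoprime a 2) : psi1 (a * x) = psi1 x := by
  unfold psi1
  rw [IsCoprime.mul_left_iff]
  simp [h]

lemma tchi_periodic (χ : GaussianInt → GaussianInt → ℤ) (hχ : IsQuadSym χ)
    (n : GaussianInt) (ho : ¬ ωg ∣ n) (a b : GaussianInt) (h : 2 * n ∣ a - b) :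
    tchi χ n a = tchi χ n b := by
  unfold tchi
  rw [sym_periodic hχ n ho a b ((dvd_mul_left _ _).trans h),
    psi1_periodic a b ((dvd_mul_right _ _).trans h),
    psi2_periodic a b ((dvd_mul_right _ _).trans h)]

/-- If multiplication by some `a` coprime to the modulus flips the sign, then `g 0 = 0`. -/
lemma gauss_zero (q : GaussianInt) (hq : q ≠ 0) (f g : GaussianInt → ℂ) (hg : IsGaussSumChar q f g)
    (a : GaussianInt) (ha : IsCoprime a q) (hf : ∀ x, f (a * x) = - f x) : g 0 = 0 := by
  obtain ⟨S, hS⟩ := exists_residues q hq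
  have h1 := hg 0 S hS
  obtain ⟨b, c, hbc⟩ := ha
  have hinj : ∀ x ∈ S, ∀ y ∈ S, a * x = a * y → x = y := by
    intro x hx y hy hxy
    have hd : q ∣ x - y := by
      refine ⟨c * (x - y), ?_⟩
      linear_combination (-(x - y)) * hbc + b * hxy
    exact (hS x).unique ⟨hx, by simp⟩ ⟨hy, hd⟩
  have h2 := hg 0 (S.image (a * ·)) (by
    intro z
    obtain ⟨x, ⟨hx, ⟨d, hd⟩⟩, hu⟩ := hS (b * z)
    refine ⟨a * x, ⟨Finset.mem_image_of_mem _ hx, ?_⟩, ?_⟩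
    · refine ⟨c * z + a * d, ?_⟩
      linear_combination (-z) * hbc + a * hd
    · rintro w ⟨hw, ⟨e, he⟩⟩
      obtain ⟨x', hx', rfl⟩ := Finset.mem_image.1 hw
      rw [hu x' ⟨hx', ⟨b * e - c * x', by linear_combination x' * hbc + b * he⟩⟩])
  rw [Finset.sum_image (fun x hx y hy h => hinj x hx y hy h)] at h2
  simp only [hf, zero_mul] at h1 h2
  simp only [neg_mul, Finset.sum_neg_distrib] at h2
  rw [← h1] at h2
  linear_combination h2 / 2

lemma tchi_flip (χ : GaussianInt → GaussianInt → ℤ) (hχ : IsQuadSym χ)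
    (n : GaussianInt) (hn : IsPrimary n) (hns : ¬ ∃ m : GaussianInt, n = m ^ 2) :
    ∃ a, IsCoprime a (2 * n) ∧ ∀ x, tchi χ n (a * x) = - tchi χ n x := by
  have hpar := primary_parity n hn
  have ho : ¬ ωg ∣ n := by rw [om_dvd]; omega
  have h2n : IsCoprime (2 : GaussianInt) n := by
    have h2 : (2 : GaussianInt) ∣ n - 1 := by
      rw [two_dvd']; simp; omega
    obtain ⟨c, hc⟩ := h2
    exact ⟨-c, 1, by linear_combination hc⟩
  by_cases ht : IsTypeOne n
  · obtain ⟨p, m, k, hp, hnp, hm⟩ := odd_factor n hn hns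
    have hpm : IsCoprime p m := (hp.irreducible.coprime_iff_not_dvd).2 hm
    have hop : ¬ ωg ∣ p := fun h => ho (by
      rw [hnp]; exact (h.trans (dvd_pow_self p (by omega))).mul_right m)
    have hom : ¬ ωg ∣ m := fun h => ho (by rw [hnp]; exact h.mul_left _)
    have hp2 : IsCoprime p 2 := (hp.irreducible.coprime_iff_not_dvd).2 (not_dvd_two p hp hop)
    obtain ⟨c, hpc, hc⟩ := exists_nonres hχ p hp hop
    obtain ⟨r, s, hrs⟩ := hp2.mul_right hpm
    -- `r p + s (2 m) = 1`
    set a := r * p + c * (s * (2 * m)) with ha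
    have ha2m : 2 * m ∣ a - 1 := ⟨(c - 1) * s, by rw [ha]; linear_combination hrs⟩
    have hap : p ∣ a - c := ⟨(1 - c) * r, by rw [ha]; linear_combination c * hrs⟩
    have hcop2m : IsCoprime a (2 * m) := by
      obtain ⟨e, he⟩ := ha2m
      exact ⟨1, -e, by linear_combination he⟩
    have hcopp : IsCoprime a p := by
      refine ((hp.irreducible.coprime_iff_not_dvd).2 fun h => hpc ?_).symm
      exact (dvd_sub_right h).1 hap
    have hcop : IsCoprime a (2 * n) := by
      rw [hnp]
      have := (hcopp.pow_right (n := 2 * k + 1)).mul_right hcop2m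
      convert this using 1
      ring
    refine ⟨a, hcop, fun x => ?_⟩
    have hsym : χ a n = -1 := by
      obtain ⟨h1, h2⟩ := sym_pow hχ a p hop (2 * k + 1)
      rw [hnp, hχ.mul_den _ _ _ h1 hom, h2, prime_periodic hχ p a c hp hop hap, hc,
        sym_periodic hχ m hom a 1 ((dvd_mul_left _ _).trans ha2m), sym_one hχ m hom, mul_one]
      exact Odd.neg_one_pow ⟨k, rfl⟩
    unfold tchi
    rw [if_pos ht, if_pos ht, sym_mul hχ n ho, hsym, psi1_mul a x hcop.of_mul_right_left]
    push_cast
    ring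
  · obtain ⟨r, s, hrs⟩ := h2n
    set a := r * 2 + ig * (s * n) with ha
    have han : n ∣ a - 1 := ⟨(ig - 1) * s, by rw [ha]; linear_combination hrs⟩
    have ha2 : (2 : GaussianInt) ∣ a - ig :=
      ⟨(1 - ig) * r, by rw [ha]; linear_combination ig * hrs⟩
    refine ⟨a, ?_, fun x => ?_⟩
    · apply IsCoprime.mul_right
      · obtain ⟨e, he⟩ := ha2
        have : ig * ig = -1 := by decide
        exact ⟨-ig, ig * e, by linear_combination (-ig) * he - this⟩
      · obtain ⟨e, he⟩ := han
        exact ⟨1, -e, by linear_combination he⟩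
    · unfold tchi
      rw [if_neg ht, if_neg ht, sym_mul hχ n ho, sym_periodic hχ n ho a 1 han, sym_one hχ n ho,
        psi2_mul_i a x ha2]
      push_cast
      ring

lemma tsum_ne_zero (f : GaussianInt → ℂ) (A : ℂ) (h0 : f 0 = 0) (h : HasSum f A) :
    ∑' m : {m : GaussianInt // m ≠ 0}, f m.1 = A := by
  have hinj : Function.Injective (fun m : {m : GaussianInt // m ≠ 0} => m.1) :=
    Subtype.val_injective
  refine HasSum.tsum_eq ?_
  refine (hinj.hasSum_iff (f := f) ?_).2 h
  intro x hx
  by_cases hx0 : x = 0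
  · rw [hx0, h0]
  · exact absurd ⟨⟨x, hx0⟩, rfl⟩ hx

/-- the theta-function identity (2.11) of the paper: for primary non-square `n`
and every `y > 0`, the twisted theta series of `χ̃_n` satisfies the indicated Poisson-type
identity. -/
theorem theta_identity_tilde_chi
    (χ : GaussianInt → GaussianInt → ℤ) (hχ : IsQuadSym χ)
    (n : GaussianInt) (hn : IsPrimary n) (hns : ¬ ∃ m : GaussianInt, n = m ^ 2)
    (g : GaussianInt → ℂ) (hg : IsGaussSumChar (2 * n) (tchi χ n) g)
    (y : ℝ) (hy : 0 < y) :
    ∑' m : {m : GaussianInt // m ≠ 0},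
        tchi χ n m.1 * Complex.exp (((-(2 * Real.pi * y * Nm m.1)) : ℝ) : ℂ) =
      ((1 / (2 * y * Nm (2 * n)) : ℝ) : ℂ) *
        ∑' k : {k : GaussianInt // k ≠ 0},
          g k.1 * Complex.exp (((-(Real.pi * Nm k.1 / (2 * y * Nm (2 * n)))) : ℝ) : ℂ) := by
  have hpar := primary_parity n hn
  have ho : ¬ ωg ∣ n := by rw [om_dvd]; omega
  have hn0 : n ≠ 0 := by rintro rfl; exact ho (dvd_zero _)
  have hq : 2 * n ≠ 0 := mul_ne_zero two_ne_zero hn0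
  obtain ⟨S, hS⟩ := exists_residues (2 * n) hq
  obtain ⟨a, hcop, hflip⟩ := tchi_flip χ hχ n hn hns
  have hg0 := gauss_zero (2 * n) hq _ g hg a hcop hflip
  have ht0 : tchi χ n 0 = 0 := by
    have := hflip 0
    rw [mul_zero] at this
    linear_combination this / 2
  obtain ⟨A, hA, hB⟩ := aux_poisson (2 * n) hq (tchi χ n) (tchi_periodic χ hχ n ho) S hS g hg y hy
  have e1 := tsum_ne_zero _ _ (by simp [ht0]) hA
  have e2 := tsum_ne_zero _ _ (by simp [hg0]) hB
  rw [e1, e2]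
end
end

section
/- Let c ∈ O_K be primary and let j ∈ {1, 2}. Then for every r ∈ O_K, the Gauss sum of the character ψ_j·(·/c) modulo 2c satisfies g(r, ψ_j·(·/c)) = (i/c) · ((−1)^{Im(r)} + (−1)^{Re(r)+j−1}) · g(r, c). -/
open Complex Real Filter Topology
open scoped BigOperators Classical

noncomputable section

theorem ax_unit_of_norm {x : GaussianInt} (h : Zsqrtd.norm x = 1) : IsUnit x := by
  rw [Zsqrtd.isUnit_iff_norm_isUnit, h]; exact isUnit_one

theorem ax_prime_not_dvd_omega {p : GaussianInt} (hp : Prime p) (ho : ¬ ωg ∣ p) : ¬ p ∣ ωg := by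
  rintro ⟨k, hk⟩
  have hn : Zsqrtd.norm p * Zsqrtd.norm k = 2 := by
    rw [← Zsqrtd.norm_mul, ← hk]; rfl
  have h1 : 0 ≤ Zsqrtd.norm p := Zsqrtd.norm_nonneg (by norm_num) p
  have h2 : 0 ≤ Zsqrtd.norm k := Zsqrtd.norm_nonneg (by norm_num) k
  have h3 : Zsqrtd.norm p ≤ 2 := by
    by_contra h
    have : Zsqrtd.norm k ≠ 0 := by rintro h0; rw [h0] at hn; omega
    have : 1 ≤ Zsqrtd.norm k := by omega
    nlinarith
  have h4 : Zsqrtd.norm p ≠ 1 := fun h => hp.not_unit (ax_unit_of_norm h)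
  have h5 : Zsqrtd.norm p ≠ 0 := by intro h; rw [h] at hn; omega
  have h6 : Zsqrtd.norm p = 2 := by omega
  have h7 : Zsqrtd.norm k = 1 := by rw [h6] at hn; omega
  obtain ⟨u, hu⟩ := ax_unit_of_norm h7
  apply ho
  rw [hk, ← hu]
  exact ⟨(↑u⁻¹ : GaussianInt), by rw [mul_assoc, Units.mul_inv, mul_one]⟩

theorem ax_two : (ig * 2 : GaussianInt) = ωg * ωg := by
  ext <;> simp [ig, ωg]

theorem ax_ig_sq : (ig * ig : GaussianInt) = -1 := by
  ext <;> simp [ig]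

theorem ax_prime_not_dvd_two {p : GaussianInt} (hp : Prime p) (ho : ¬ ωg ∣ p) : ¬ p ∣ 2 := by
  intro h
  have : p ∣ ωg * ωg := by rw [← ax_two]; exact h.mul_left _
  rcases hp.dvd_or_dvd this with h | h <;> exact ax_prime_not_dvd_omega hp ho h

theorem ax_sign_eq {p : GaussianInt} (hp : Prime p) (ho : ¬ ωg ∣ p) {s t : ℤ}
    (hs : s = 1 ∨ s = -1) (ht : t = 1 ∨ t = -1) (h : p ∣ ((s : GaussianInt) - t)) : s = t := by
  have h2 := ax_prime_not_dvd_two hp ho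
  rcases hs with rfl | rfl <;> rcases ht with rfl | rfl
  · rfl
  · exfalso; apply h2; convert h using 1; norm_num
  · exfalso; apply h2; rw [← dvd_neg]; convert h using 1; norm_num
  · rfl

structure AxGood (χ : GaussianInt → GaussianInt → ℤ) (c : GaussianInt) : Prop where
  congr : ∀ a b, c ∣ a - b → χ a c = χ b c
  mul : ∀ a b, χ (a * b) c = χ a c * χ b c
  omega : χ ωg c = 1 ∨ χ ωg c = -1
  ig : χ ig c = 1 ∨ χ ig c = -1

theorem ax_good_prime {χ : GaussianInt → GaussianInt → ℤ} (hχ : IsQuadSym χ)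
    {p : GaussianInt} (hp : Prime p) (ho : ¬ ωg ∣ p) : AxGood χ p := by
  refine ⟨?_, ?_, ?_, ?_⟩
  · intro a b hab
    by_cases ha : p ∣ a
    · have hb : p ∣ b := (dvd_iff_dvd_of_dvd_sub hab).1 ha
      rw [hχ.zero_of_dvd p a hp ha, hχ.zero_of_dvd p b hp hb]
    · have hb : ¬ p ∣ b := fun h => ha ((dvd_iff_dvd_of_dvd_sub hab).2 h)
      obtain ⟨h1, h2⟩ := hχ.val_prime p a hp ho ha
      obtain ⟨h3, h4⟩ := hχ.val_prime p b hp ho hb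
      refine ax_sign_eq hp ho h1 h3 ?_
      have h5 := hab.trans (sub_dvd_pow_sub_pow a b (((Zsqrtd.norm p).toNat - 1) / 2))
      have := dvd_sub (dvd_add h5 h4) h2
      convert this using 1
      ring
  · intro a b
    by_cases ha : p ∣ a
    · rw [hχ.zero_of_dvd p a hp ha, hχ.zero_of_dvd p _ hp (ha.mul_right b), zero_mul]
    by_cases hb : p ∣ b
    · rw [hχ.zero_of_dvd p b hp hb, hχ.zero_of_dvd p _ hp (hb.mul_left a), mul_zero]
    have hab : ¬ p ∣ a * b := fun h => (hp.dvd_or_dvd h).elim ha hb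
    obtain ⟨h1, h2⟩ := hχ.val_prime p a hp ho ha
    obtain ⟨h3, h4⟩ := hχ.val_prime p b hp ho hb
    obtain ⟨h5, h6⟩ := hχ.val_prime p _ hp ho hab
    refine ax_sign_eq hp ho h5 ?_ ?_
    · rcases h1 with h | h <;> rcases h3 with h' | h' <;> rw [h, h'] <;> norm_num
    · have := dvd_sub (dvd_add (h2.mul_right (b ^ (((Zsqrtd.norm p).toNat - 1) / 2)))
        (h4.mul_left (χ a p : GaussianInt))) h6
      convert this using 1
      push_cast
      rw [mul_pow]
      ring
  · exact (hχ.val_prime p _ hp ho (ax_prime_not_dvd_omega hp ho)).1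
  · refine (hχ.val_prime p _ hp ho ?_).1
    intro h
    apply hp.not_unit
    rw [isUnit_iff_dvd_one, ← dvd_neg, ← ax_ig_sq]
    exact h.mul_left _

theorem ax_good {χ : GaussianInt → GaussianInt → ℤ} (hχ : IsQuadSym χ)
    (c : GaussianInt) : ¬ ωg ∣ c → AxGood χ c := by
  induction c using UniqueFactorizationMonoid.induction_on_prime with
  | h₁ => intro h; exact absurd (dvd_zero _) h
  | h₂ u hu =>
    intro _
    exact ⟨fun a b _ => by rw [hχ.unit_den _ _ hu, hχ.unit_den _ _ hu],
      fun a b => by rw [hχ.unit_den _ _ hu, hχ.unit_den _ _ hu, hχ.unit_den _ _ hu]; rfl,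
      Or.inl (hχ.unit_den _ _ hu), Or.inl (hχ.unit_den _ _ hu)⟩
  | h₃ a p ha hp ih =>
    intro h
    have h1 : ¬ ωg ∣ p := fun h' => h (h'.mul_right _)
    have h2 : ¬ ωg ∣ a := fun h' => h (h'.mul_left _)
    have A := ax_good_prime hχ hp h1
    have B := ih h2
    refine ⟨?_, ?_, ?_, ?_⟩
    · intro x y hxy
      rw [hχ.mul_den _ _ _ h1 h2, hχ.mul_den _ _ _ h1 h2,
        A.congr x y ((dvd_mul_right _ _).trans hxy), B.congr x y ((dvd_mul_left _ _).trans hxy)]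
    · intro x y
      rw [hχ.mul_den _ _ _ h1 h2, hχ.mul_den _ _ _ h1 h2, hχ.mul_den _ _ _ h1 h2, A.mul, B.mul]
      ring
    · rw [hχ.mul_den _ _ _ h1 h2]
      rcases A.omega with h | h <;> rcases B.omega with h' | h' <;> rw [h, h'] <;> norm_num
    · rw [hχ.mul_den _ _ _ h1 h2]
      rcases A.ig with h | h <;> rcases B.ig with h' | h' <;> rw [h, h'] <;> norm_num

theorem ax_chi_two {χ : GaussianInt → GaussianInt → ℤ} {c : GaussianInt} (h : AxGood χ c) :
    χ 2 c = χ ig c := by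
  have h1 := h.mul ig 2
  rw [ax_two, h.mul] at h1
  rcases h.omega with h2 | h2 <;> rcases h.ig with h3 | h3 <;> rw [h2, h3] at h1 <;> rw [h3] <;>
    omega

theorem ax_residues (c : GaussianInt) (hc : c ≠ 0) :
    ∃ S : Finset GaussianInt, ∀ z : GaussianInt, ∃! x, x ∈ S ∧ c ∣ (z - x) := by
  have hfin : Finite (GaussianInt ⧸ Ideal.span {c}) := by
    let N := Zsqrtd.norm c
    let T := Set.Icc (-N) N ×ˢ Set.Icc (-N) N
    have hT : Finite T := ((Set.finite_Icc _ _).prod (Set.finite_Icc _ _)).to_subtype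
    refine Finite.of_surjective
      (fun t : T => Ideal.Quotient.mk (Ideal.span {c}) (⟨t.1.1, t.1.2⟩ : GaussianInt)) ?_
    intro q
    obtain ⟨z, rfl⟩ := Ideal.Quotient.mk_surjective q
    have h1 : Zsqrtd.norm (z % c) < N := GaussianInt.norm_mod_lt z hc
    have h2 : Zsqrtd.norm (z % c) = (z % c).re * (z % c).re + (z % c).im * (z % c).im := by
      rw [Zsqrtd.norm_def]; ring
    refine ⟨⟨((z % c).re, (z % c).im), ?_⟩, ?_⟩
    · simp only [T, Set.mem_prod, Set.mem_Icc]
      refine ⟨⟨?_, ?_⟩, ?_, ?_⟩ <;> nlinarith [mul_self_nonneg (z % c).re, mul_self_nonneg (z % c).im]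
    · apply Ideal.Quotient.eq.2
      rw [Ideal.mem_span_singleton]
      have := EuclideanDomain.mod_add_div z c
      exact ⟨-(z / c), by
        show z % c - z = _
        linear_combination this⟩
  have := Fintype.ofFinite (GaussianInt ⧸ Ideal.span {c})
  refine ⟨Finset.univ.image (fun q : GaussianInt ⧸ Ideal.span {c} => Quotient.out q), ?_⟩
  intro z
  have key : ∀ q : GaussianInt ⧸ Ideal.span {c},
      Ideal.Quotient.mk (Ideal.span {c}) (Quotient.out q) = q := fun q => Quotient.out_eq q
  refine ⟨Quotient.out (Ideal.Quotient.mk (Ideal.span {c}) z), ⟨by simp, ?_⟩, ?_⟩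
  · rw [← Ideal.mem_span_singleton, ← Ideal.Quotient.eq, key]
  · rintro x ⟨hx, hd⟩
    simp only [Finset.mem_image, Finset.mem_univ, true_and] at hx
    obtain ⟨q, rfl⟩ := hx
    rw [← Ideal.mem_span_singleton, ← Ideal.Quotient.eq, key] at hd
    rw [hd]

theorem ax_eT_add (a b : ℂ) : eT (a + b) = eT a * eT b := by
  unfold eT
  rw [← Complex.exp_add, map_add]
  congr 1
  ring

theorem ax_neg_one_zpow (n : ℤ) : (-1 : ℂ) ^ n = Complex.exp (n * (Real.pi * Complex.I)) := by
  rw [Complex.exp_int_mul, Complex.exp_pi_mul_I]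

theorem ax_eT_half (r : GaussianInt) : eT (GaussianInt.toComplex r / 2) = (-1 : ℂ) ^ r.im := by
  rw [ax_neg_one_zpow]
  unfold eT
  congr 1
  rw [GaussianInt.toComplex_def]
  simp only [map_div₀, map_add, map_mul, Complex.conj_I, map_intCast, map_ofNat]
  field_simp
  ring

theorem ax_two_dvd (x : GaussianInt) : 2 ∣ x ↔ (2 : ℤ) ∣ x.re ∧ (2 : ℤ) ∣ x.im := by
  have := Zsqrtd.intCast_dvd (d := -1) 2 x
  exact_mod_cast this

def axY : Finset GaussianInt := {0, 1, ig, ωg}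

theorem axY_exists (w : GaussianInt) : ∃ y ∈ axY, 2 ∣ w - y := by
  rcases Int.emod_two_eq_zero_or_one w.re with h | h <;>
    rcases Int.emod_two_eq_zero_or_one w.im with h' | h'
  · exact ⟨0, by simp [axY], by rw [ax_two_dvd]; simp; omega⟩
  · exact ⟨ig, by simp [axY], by rw [ax_two_dvd]; simp [ig]; omega⟩
  · exact ⟨1, by simp [axY], by rw [ax_two_dvd]; simp; omega⟩
  · exact ⟨ωg, by simp [axY], by rw [ax_two_dvd]; simp [ωg]; omega⟩

theorem axY_unique {y y' : GaussianInt} (hy : y ∈ axY) (hy' : y' ∈ axY) (h : 2 ∣ y - y') :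
    y = y' := by
  rw [ax_two_dvd] at h
  simp only [axY, Finset.mem_insert, Finset.mem_singleton] at hy hy'
  rcases hy with rfl | rfl | rfl | rfl <;> rcases hy' with rfl | rfl | rfl | rfl <;>
    first
    | rfl
    | (exfalso; simp [ig, ωg] at h)

theorem ax_res_two_c {c : GaussianInt} (hc0 : c ≠ 0) (hc : 2 ∣ c - 1) {S : Finset GaussianInt}
    (hS : ∀ z : GaussianInt, ∃! x, x ∈ S ∧ c ∣ (z - x)) :
    (∀ w : GaussianInt, ∃! x, x ∈ (axY ×ˢ S).image (fun t => c * t.1 + 2 * t.2) ∧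
      2 * c ∣ (w - x)) := by
  intro w
  obtain ⟨k, hk⟩ := hc
  obtain ⟨y, hy, t, ht⟩ := axY_exists w
  obtain ⟨z, ⟨hz, u, hu⟩, huniq⟩ := hS (t - k * y)
  refine ⟨c * y + 2 * z, ⟨Finset.mem_image.2 ⟨(y, z), Finset.mem_product.2 ⟨hy, hz⟩, rfl⟩, u, ?_⟩, ?_⟩
  · linear_combination ht + 2 * hu - y * hk
  · rintro x ⟨hx, v, hv⟩
    obtain ⟨⟨y', z'⟩, hm, rfl⟩ := Finset.mem_image.1 hx
    obtain ⟨hy', hz'⟩ := Finset.mem_product.1 hm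
    simp only at hy' hz' hv ⊢
    have hyy : y' = y := axY_unique hy' hy ⟨t - k * y' - z' - c * v, by
      linear_combination ht - hv - y' * hk⟩
    subst hyy
    have : z' = z := huniq z' ⟨hz', v, by
      have h2 : (2 : GaussianInt) ≠ 0 := by norm_num
      apply mul_left_cancel₀ h2
      linear_combination hv - ht + y' * hk⟩
    rw [this]

theorem ax_inj {c : GaussianInt} (hc : 2 ∣ c - 1) (S : Finset GaussianInt) :
    Set.InjOn (fun t : GaussianInt × GaussianInt => c * t.1 + 2 * t.2) (axY ×ˢ S : Finset _) := by
  rintro ⟨y, z⟩ h ⟨y', z'⟩ h' he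
  obtain ⟨k, hk⟩ := hc
  rw [Finset.mem_coe, Finset.mem_product] at h h'
  simp only at he h h'
  have hyy : y = y' := axY_unique h.1 h'.1 ⟨z' - z - k * (y - y'), by
    linear_combination he - (y - y') * hk⟩
  subst hyy
  have h2 : (2 : GaussianInt) ≠ 0 := by norm_num
  have : z = z' := mul_left_cancel₀ h2 (by linear_combination he)
  rw [this]

theorem ax_omega_dvd_two : ωg ∣ 2 := ⟨1 - ig, by ext <;> simp [ωg, ig]⟩

theorem ax_omega_not_unit : ¬ IsUnit ωg := by
  rw [Zsqrtd.isUnit_iff_norm_isUnit, Int.isUnit_iff]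
  simp [Zsqrtd.norm_def, ωg]

theorem ax_psi1 {m y : GaussianInt} (h : 2 ∣ m - y) (hy : y ∈ axY) :
    psi1 m = if y = 1 ∨ y = ig then 1 else 0 := by
  have n1 : (0 : GaussianInt) ≠ ig := by simp [ig, Zsqrtd.ext_iff]
  have n2 : ωg ≠ 1 := by simp [ωg, Zsqrtd.ext_iff]
  have n3 : ωg ≠ ig := by simp [ig, ωg, Zsqrtd.ext_iff]
  have hnot : ωg ∣ m → psi1 m = 0 := by
    intro hm
    unfold psi1
    rw [if_neg]
    intro hcop
    exact ax_omega_not_unit (hcop.isUnit_of_dvd' hm ax_omega_dvd_two)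
  obtain ⟨k, hk⟩ := h
  simp only [axY, Finset.mem_insert, Finset.mem_singleton] at hy
  rcases hy with rfl | rfl | rfl | rfl
  · rw [if_neg (by simp [n1])]
    apply hnot
    have : m = 2 * k := by linear_combination hk
    rw [this]
    exact ax_omega_dvd_two.mul_right _
  · rw [if_pos (Or.inl rfl)]
    unfold psi1
    rw [if_pos]
    exact ⟨1, -k, by linear_combination hk⟩
  · rw [if_pos (Or.inr rfl)]
    unfold psi1
    rw [if_pos]
    exact ⟨-ig, ig * k, by linear_combination (-ig) * hk - ax_ig_sq⟩
  · rw [if_neg (by simp [n2, n3])]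
    apply hnot
    have : m = ωg + 2 * k := by linear_combination hk
    rw [this]
    exact dvd_add dvd_rfl (ax_omega_dvd_two.mul_right _)

theorem ax_psi2 {m y : GaussianInt} (h : 2 ∣ m - y) (hy : y ∈ axY) :
    psi2 m = if y = 1 then 1 else if y = ig then -1 else 0 := by
  have key : ∀ y' ∈ axY, 2 ∣ m - y' ↔ y = y' := by
    intro y' hy'
    constructor
    · intro h'
      refine axY_unique hy hy' ?_
      have := dvd_sub h' h
      rwa [show m - y' - (m - y) = y - y' by ring] at this
    · rintro rfl; exact h
  unfold psi2
  simp only [key 1 (by simp [axY]), key ig (by simp [axY])]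

theorem ax_sumY (F : GaussianInt → ℂ) :
    ∑ y ∈ axY, F y = F 0 + (F 1 + (F ig + F ωg)) := by
  unfold axY
  rw [Finset.sum_insert, Finset.sum_insert, Finset.sum_insert, Finset.sum_singleton] <;>
    simp [ig, ωg, Zsqrtd.ext_iff]

/-- the factorization (2.3) of the paper for the Gauss sum of the character
`ψ_j · (·/c)` modulo `2c`:
`g(r, ψ_j·(·/c)) = (i/c)((−1)^{Im r} + (−1)^{Re r + j − 1}) g(r, c)`. -/
theorem gauss_sum_psi_factorization
    (χ : GaussianInt → GaussianInt → ℤ) (hχ : IsQuadSym χ)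
    (c : GaussianInt) (hc : IsPrimary c) (j : ℕ) (hj : j = 1 ∨ j = 2)
    (g2 : GaussianInt → ℂ)
    (hg2 : IsGaussSumChar (2 * c) (fun m => (if j = 1 then psi1 m else psi2 m) * (χ m c : ℂ)) g2)
    (g : GaussianInt → GaussianInt → ℂ) (hg : IsGaussSum χ g) (r : GaussianInt) :
    g2 r = (χ ig c : ℂ) * ((-1 : ℂ) ^ r.im + (-1 : ℂ) ^ (r.re + (j : ℤ) - 1)) * g r c := by
  have hc2 : 2 ∣ c - 1 := by
    refine dvd_trans ⟨ig * ωg, ?_⟩ hc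
    rw [pow_succ, pow_two, ← ax_two]; ring
  have hodd : ¬ ωg ∣ c := by
    intro h
    apply ax_omega_not_unit
    rw [isUnit_iff_dvd_one]
    have := dvd_sub h (ax_omega_dvd_two.trans hc2)
    simpa using this
  have hc0 : c ≠ 0 := by rintro rfl; exact hodd (dvd_zero _)
  have G := ax_good hχ c hodd
  obtain ⟨S, hS⟩ := ax_residues c hc0
  rw [hg2 r _ (ax_res_two_c hc0 hc2 hS), hg r c hc0 S hS, Finset.sum_image (ax_inj hc2 S),
    Finset.sum_product]
  have hcC : GaussianInt.toComplex c ≠ 0 := by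
    rwa [Ne, GaussianInt.toComplex_eq_zero]
  let P : GaussianInt → ℂ := fun y => if j = 1 then (if y = 1 ∨ y = ig then 1 else 0)
    else (if y = 1 then 1 else if y = ig then -1 else 0)
  have hterm : ∀ y ∈ axY, ∀ z ∈ S,
      (if j = 1 then psi1 (c * y + 2 * z) else psi2 (c * y + 2 * z)) *
        (χ (c * y + 2 * z) c : ℂ) *
        eT (GaussianInt.toComplex (r * (c * y + 2 * z)) / GaussianInt.toComplex (2 * c)) =
      (P y * eT (GaussianInt.toComplex (r * y) / 2)) * ((χ ig c : ℂ) *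
        ((χ z c : ℂ) * eT (GaussianInt.toComplex (r * z) / GaussianInt.toComplex c))) := by
    intro y hy z _
    obtain ⟨k, hk⟩ := hc2
    have h1 : 2 ∣ c * y + 2 * z - y := ⟨k * y + z, by linear_combination y * hk⟩
    have h2 : χ (c * y + 2 * z) c = χ ig c * χ z c := by
      rw [← ax_chi_two G, ← G.mul]
      exact G.congr _ _ ⟨y, by ring⟩
    have h3 : GaussianInt.toComplex (r * (c * y + 2 * z)) / GaussianInt.toComplex (2 * c) =
        GaussianInt.toComplex (r * y) / 2 +
          GaussianInt.toComplex (r * z) / GaussianInt.toComplex c := by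
      simp only [map_mul, map_add, map_ofNat]
      field_simp
    rw [ax_psi1 h1 hy, ax_psi2 h1 hy, h2, h3, ax_eT_add]
    simp only [P]
    push_cast
    ring
  rw [Finset.sum_congr rfl (fun y hy => Finset.sum_congr rfl (hterm y hy))]
  simp_rw [← Finset.mul_sum]
  rw [← Finset.sum_mul, ax_sumY]
  have n1 : (0 : GaussianInt) ≠ ig := by simp [ig, Zsqrtd.ext_iff]
  have n2 : ωg ≠ 1 := by simp [ωg, Zsqrtd.ext_iff]
  have n3 : ωg ≠ ig := by simp [ig, ωg, Zsqrtd.ext_iff]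
  have n4 : ig ≠ 1 := by simp [ig, Zsqrtd.ext_iff]
  have e1 : eT (GaussianInt.toComplex (r * 1) / 2) = (-1 : ℂ) ^ r.im := by
    rw [ax_eT_half, mul_one]
  have e2 : eT (GaussianInt.toComplex (r * ig) / 2) = (-1 : ℂ) ^ r.re := by
    rw [ax_eT_half]; simp [ig]
  rw [e1, e2]
  rcases hj with rfl | rfl
  · simp [P, n1, n2, n3]
    ring
  · have e3 : (-1 : ℂ) ^ (r.re + ((2 : ℕ) : ℤ) - 1) = - (-1 : ℂ) ^ r.re := by
      rw [show r.re + ((2 : ℕ) : ℤ) - 1 = r.re + 1 by push_cast; ring, zpow_add_one₀ (by norm_num)]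
      ring
    rw [e3]
    simp [P, n1, n2, n3, n4]
    ring
end
end
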